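/- Let n ≥ 1, k ∈ ℕ, let Ω ⊆ ℝⁿ be open, and let X, Y : Ω → ℝⁿ be of class C^{k+1}. Assume that at every point m ∈ Ω with Y(m) = 0 the derivative DY(m) is invertible. Then there exists a map g : Ω → Matrix (Fin n) (Fin n) ℝ of class C^k with g(x) symmetric positive definite for all x ∈ Ω and Y(x) = g(x) · X(x) for all x ∈ Ω, if and only if the following three conditions hold: (i) ⟨X(m), Y(m)⟩ > 0 for every m ∈ Ω with Y(m) ≠ 0; (ii) X(m) = 0 for every m ∈ Ω with Y(m) = 0; (iii) for every m ∈ Ω with Y(m) = 0 there exists a symmetric positive definite matrix ḡ ∈ Matrix (Fin n) (Fin n) ℝ such that DY(m) v = ḡ · (DX(m) v) for all v ∈ ℝⁿ. -/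

import Mathlib

/-!
Near a zero of `Y` the map `X` is a chart. In this chart `Y` becomes a map `f` with `f 0 = 0`
whose derivative `G` at `0` is symmetric positive definite, and it suffices to write
`f z = h z *ᵥ z` with `h` symmetric, of class `C^k`, and `h 0 = G`. The part of the Taylor
polynomial of `f` beyond first order has the form `D z z z` with `D z` symmetric, and the Koszul
combination `D z u v + D z v u - D u v z` is a symmetric factor of it. The remainder `q` is flat
to order `k + 1` and has the symmetric factor `ℓ ⊗ q + q ⊗ ℓ - q z • ℓ ⊗ ℓ`, where
`ℓ = ⟨z, ·⟩ / ‖z‖²`.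
This factor is of class `C^k` across the origin: a product of something homogeneous of degree
`-a` with something flat to order `k + a` tends to `0`, and its derivative is a sum of two such
products with `k - 1` in place of `k`.

Away from the zeros of `Y` there is an explicit formula for the matrix. The conditions imposed
on `g x` are convex, so the local solutions are glued by a partition of unity.
-/

open Filter Asymptotics Set
open scoped ContDiff Topology Nat Matrix

set_option maxSynthPendingDepth 3

universe u

section Taylor

variable {E F G : Type u} [NormedAddCommGroup E] [NormedSpace ℝ E]
  [NormedAddCommGroup F] [NormedSpace ℝ F] [NormedAddCommGroup G] [NormedSpace ℝ G]

/-- The homogeneous part of degree `j` of the Taylor expansion of `f` at the origin. -/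
noncomputable def taylorTerm (j : ℕ) (f : E → F) (z : E) : F :=
  (j ! : ℝ)⁻¹ • iteratedFDeriv ℝ j f 0 fun _ => z

theorem taylorTerm_zero (f : E → F) : taylorTerm 0 f = fun _ => f 0 := by
  funext z
  simp [taylorTerm]

theorem taylorTerm_succ (j : ℕ) (f : E → F) :
    taylorTerm (j + 1) f = fun z => (j + 1 : ℝ)⁻¹ • taylorTerm j (fderiv ℝ f) z z := by
  funext z
  simp only [taylorTerm, iteratedFDeriv_succ_apply_right, smul_apply,
    smul_smul, Nat.factorial_succ, Nat.cast_mul, Nat.cast_succ, mul_inv]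
  rfl

theorem contDiff_taylorTerm (j : ℕ) (f : E → F) {n : ℕ∞ω} : ContDiff ℝ n (taylorTerm j f) :=
  ((iteratedFDeriv ℝ j f 0).contDiff.comp (contDiff_pi' fun _ => contDiff_id)).const_smul _

theorem taylorTerm_congr {f g : E → F} (h : f =ᶠ[𝓝 0] g) (j : ℕ) :
    taylorTerm j f = taylorTerm j g := by
  funext z
  simp only [taylorTerm, (h.iteratedFDeriv ℝ j).eq_of_nhds]

theorem taylorTerm_clm_comp (L : F →L[ℝ] G) {j : ℕ} {f : E → F} (hf : ContDiffAt ℝ j f 0) (z : E) :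
    taylorTerm j (L ∘ f) z = L (taylorTerm j f z) := by
  simp [taylorTerm, L.iteratedFDeriv_comp_left hf le_rfl]

theorem taylorTerm_fderiv_fderiv_comm {j : ℕ} {f : E → F} (hf : ContDiffAt ℝ (j + 2 : ℕ) f 0)
    (z u v : E) :
    taylorTerm j (fderiv ℝ (fderiv ℝ f)) z u v = taylorTerm j (fderiv ℝ (fderiv ℝ f)) z v u := by
  let flip := (ContinuousLinearMap.flipₗᵢ ℝ E E F).toContinuousLinearEquiv.toContinuousLinearMap
  have hsymm : flip ∘ fderiv ℝ (fderiv ℝ f) =ᶠ[𝓝 0] fderiv ℝ (fderiv ℝ f) := by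
    filter_upwards [hf.eventually (ENat.natCast_ne_coe_top _)] with x hx
    ext u v
    exact (hx.isSymmSndFDerivAt (by simp)).eq v u
  have hD : ContDiffAt ℝ j (fderiv ℝ (fderiv ℝ f)) 0 :=
    (hf.fderiv_right (m := (j + 1 : ℕ)) (by norm_cast)).fderiv_right (by norm_cast)
  have hflip := taylorTerm_clm_comp (G := E →L[ℝ] E →L[ℝ] F) flip hD z
  rw [taylorTerm_congr hsymm] at hflip
  exact DFunLike.congr_fun (DFunLike.congr_fun hflip u) v

theorem fderiv_taylorTerm_succ_eq_smul (j : ℕ) (f : E → F) (z : E) :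
    fderiv ℝ (taylorTerm (j + 1) f) z = (j + 1 : ℝ)⁻¹ •
      (taylorTerm j (fderiv ℝ f) z + (fderiv ℝ (taylorTerm j (fderiv ℝ f)) z).flip z) := by
  have hd : DifferentiableAt ℝ (taylorTerm j (fderiv ℝ f)) z :=
    (contDiff_taylorTerm j _ (n := 1)).contDiffAt.differentiableAt one_ne_zero
  rw [taylorTerm_succ]
  simpa using ((hd.hasFDerivAt.clm_apply (hasFDerivAt_id z)).fun_const_smul (j + 1 : ℝ)⁻¹).fderiv

theorem fderiv_taylorTerm_succ {j : ℕ} {f : E → F} (hf : ContDiffAt ℝ (j + 1 : ℕ) f 0) :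
    fderiv ℝ (taylorTerm (j + 1) f) = taylorTerm j (fderiv ℝ f) := by
  funext z
  rw [fderiv_taylorTerm_succ_eq_smul]
  induction j generalizing F with
  | zero => simp [taylorTerm_zero]
  | succ j ih =>
    have hDf : ContDiffAt ℝ (j + 1 : ℕ) (fderiv ℝ f) 0 := hf.fderiv_right (by norm_cast)
    have hflip : (taylorTerm j (fderiv ℝ (fderiv ℝ f)) z).flip z =
        (j + 1 : ℝ) • taylorTerm (j + 1) (fderiv ℝ f) z := by
      ext v
      rw [taylorTerm_succ, smul_inv_smul₀ (by positivity)]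
      exact taylorTerm_fderiv_fderiv_comm hf z v z
    rw [fderiv_taylorTerm_succ_eq_smul, ih hDf, hflip]
    push_cast
    match_scalars
    field

/-- The Taylor polynomial of degree `k` of `f` at the origin. -/
noncomputable def taylorPolynomial (k : ℕ) (f : E → F) (z : E) : F :=
  ∑ j ∈ Finset.range (k + 1), taylorTerm j f z

theorem contDiff_taylorPolynomial (k : ℕ) (f : E → F) {n : ℕ∞ω} :
    ContDiff ℝ n (taylorPolynomial k f) :=
  .sum fun j _ => contDiff_taylorTerm j f

theorem taylorPolynomial_apply_zero (k : ℕ) (f : E → F) : taylorPolynomial k f 0 = f 0 := by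
  simp [taylorPolynomial, Finset.sum_range_succ', taylorTerm_zero, taylorTerm_succ]

theorem fderiv_taylorPolynomial_succ {k : ℕ} {f : E → F} (hf : ContDiffAt ℝ (k + 1 : ℕ) f 0) :
    fderiv ℝ (taylorPolynomial (k + 1) f) = taylorPolynomial k (fderiv ℝ f) := by
  funext z
  have hdiff (j : ℕ) : DifferentiableAt ℝ (taylorTerm j f) z :=
    (contDiff_taylorTerm j f (n := 1)).contDiffAt.differentiableAt one_ne_zero
  unfold taylorPolynomial
  rw [fderiv_fun_sum fun j _ => hdiff j, Finset.sum_range_succ']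
  simp only [taylorTerm_zero, fderiv_fun_const, Pi.zero_apply, add_zero]
  refine Finset.sum_congr rfl fun j hj => ?_
  rw [fderiv_taylorTerm_succ (hf.of_le (mod_cast Finset.mem_range.1 hj))]

end Taylor

section Flat

variable {E F : Type u} [NormedAddCommGroup E] [NormedSpace ℝ E]
  [NormedAddCommGroup F] [NormedSpace ℝ F]

/-- `f` is of class `C^k` at the origin and all its derivatives up to order `k` vanish there. -/
structure IsFlatAtZero (k : ℕ) (f : E → F) : Prop where
  contDiffAt : ContDiffAt ℝ k f 0
  iteratedFDeriv_eq_zero : ∀ j ≤ k, iteratedFDeriv ℝ j f 0 = 0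

namespace IsFlatAtZero

variable {k : ℕ} {f : E → F}

theorem congr {g : E → F} (hf : IsFlatAtZero k f) (hg : g =ᶠ[𝓝 0] f) : IsFlatAtZero k g where
  contDiffAt := hf.contDiffAt.congr_of_eventuallyEq hg
  iteratedFDeriv_eq_zero j hj :=
    (hg.iteratedFDeriv ℝ j).eq_of_nhds.trans (hf.iteratedFDeriv_eq_zero j hj)

theorem map_zero (hf : IsFlatAtZero k f) : f 0 = 0 := by
  simpa using DFunLike.congr_fun (hf.iteratedFDeriv_eq_zero 0 k.zero_le) 0

theorem mono {l : ℕ} (hf : IsFlatAtZero k f) (hl : l ≤ k) : IsFlatAtZero l f where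
  contDiffAt := hf.contDiffAt.of_le (mod_cast hl)
  iteratedFDeriv_eq_zero j hj := hf.iteratedFDeriv_eq_zero j (hj.trans hl)

protected theorem fderiv (hf : IsFlatAtZero (k + 1) f) : IsFlatAtZero k (fderiv ℝ f) where
  contDiffAt := hf.contDiffAt.fderiv_right (by norm_cast)
  iteratedFDeriv_eq_zero j hj := by
    rw [← norm_eq_zero, norm_iteratedFDeriv_fderiv, hf.iteratedFDeriv_eq_zero _ (by omega),
      norm_zero]

theorem of_fderiv (hf : ContDiffAt ℝ (k + 1 : ℕ) f 0) (hf₀ : f 0 = 0)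
    (hDf : IsFlatAtZero k (fderiv ℝ f)) : IsFlatAtZero (k + 1) f where
  contDiffAt := hf
  iteratedFDeriv_eq_zero j hj := by
    cases j with
    | zero => ext; simpa using hf₀
    | succ j =>
      rw [← norm_eq_zero, ← norm_iteratedFDeriv_fderiv,
        hDf.iteratedFDeriv_eq_zero j (by omega), norm_zero]

theorem isLittleO (hf : IsFlatAtZero k f) : f =o[𝓝 0] fun z => ‖z‖ ^ k := by
  induction k generalizing F with
  | zero =>
    simpa [hf.map_zero] using hf.contDiffAt.continuousAt.tendsto
  | succ k ih =>
    refine isLittleO_iff.2 fun ε hε => ?_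
    obtain ⟨r, hr, hball⟩ := Metric.eventually_nhds_iff_ball.1
      ((isLittleO_iff.1 (ih hf.fderiv) hε).and (hf.contDiffAt.eventually (by simp)))
    filter_upwards [Metric.ball_mem_nhds 0 hr] with z hz
    have hsub : Metric.closedBall (0 : E) ‖z‖ ⊆ Metric.ball 0 r :=
      Metric.closedBall_subset_ball (mem_ball_zero_iff.1 hz)
    have hdiff : ∀ y ∈ Metric.closedBall (0 : E) ‖z‖, DifferentiableAt ℝ f y := fun y hy =>
      (hball y (hsub hy)).2.differentiableAt (by simp)
    have hbound : ∀ y ∈ Metric.closedBall (0 : E) ‖z‖, ‖fderiv ℝ f y‖ ≤ ε * ‖z‖ ^ k := by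
      intro y hy
      refine (hball y (hsub hy)).1.trans ?_
      rw [norm_pow, norm_norm]
      gcongr
      exact mem_closedBall_zero_iff.1 hy
    have hmean := (convex_closedBall (0 : E) ‖z‖).norm_image_sub_le_of_norm_fderiv_le hdiff hbound
      (Metric.mem_closedBall_self (norm_nonneg z)) (mem_closedBall_zero_iff.2 le_rfl)
    simpa [hf.map_zero, pow_succ, mul_assoc] using hmean

end IsFlatAtZero

theorem isFlatAtZero_sub_taylorPolynomial {k : ℕ} {f : E → F} (hf : ContDiffAt ℝ k f 0) :
    IsFlatAtZero k (f - taylorPolynomial k f) := by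
  have hsub : ContDiffAt ℝ k (f - taylorPolynomial k f) 0 :=
    hf.sub (contDiff_taylorPolynomial k f).contDiffAt
  have hzero : (f - taylorPolynomial k f) 0 = 0 := by
    simp [taylorPolynomial_apply_zero]
  induction k generalizing F with
  | zero =>
    refine ⟨hsub, fun j hj => ?_⟩
    obtain rfl := Nat.le_zero.1 hj
    ext
    simpa using hzero
  | succ k ih =>
    have hDf : ContDiffAt ℝ k (fderiv ℝ f) 0 := hf.fderiv_right (by norm_cast)
    refine .of_fderiv hsub hzero <| (ih hDf (hDf.sub (contDiff_taylorPolynomial k _).contDiffAt)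
      (by simp [taylorPolynomial_apply_zero])).congr ?_
    filter_upwards [hf.eventually (by simp)] with z hz
    rw [fderiv_sub (hz.differentiableAt (by simp))
      ((contDiff_taylorPolynomial (n := 1) _ f).contDiffAt.differentiableAt one_ne_zero),
      fderiv_taylorPolynomial_succ hf, Pi.sub_apply]

end Flat

section Homogeneous

variable {E F F₁ F₂ G : Type u} [NormedAddCommGroup E] [NormedSpace ℝ E]
  [NormedAddCommGroup F] [NormedSpace ℝ F] [NormedAddCommGroup F₁] [NormedSpace ℝ F₁]
  [NormedAddCommGroup F₂] [NormedSpace ℝ F₂] [NormedAddCommGroup G] [NormedSpace ℝ G]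

/-- `p` is smooth away from the origin and positively homogeneous of degree `-a` there; the value
`p 0` is unconstrained. -/
structure IsSmoothHomogeneousNeg (a : ℕ) (p : E → F) : Prop where
  contDiffAt : ∀ z ≠ 0, ContDiffAt ℝ ∞ p z
  map_smul : ∀ c : ℝ, 0 < c → ∀ z ≠ 0, p (c • z) = (c ^ a)⁻¹ • p z

namespace IsSmoothHomogeneousNeg

variable {a : ℕ} {p : E → F}

theorem differentiableAt (hp : IsSmoothHomogeneousNeg a p) {z : E} (hz : z ≠ 0) :
    DifferentiableAt ℝ p z :=
  (hp.contDiffAt z hz).differentiableAt (by simp)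

protected theorem fderiv (hp : IsSmoothHomogeneousNeg a p) :
    IsSmoothHomogeneousNeg (a + 1) (fderiv ℝ p) where
  contDiffAt z hz := (hp.contDiffAt z hz).fderiv_right (by simp)
  map_smul c hc z hz := by
    have hscaled : (fun y => p (c • y)) =ᶠ[𝓝 z] fun y => (c ^ a)⁻¹ • p y := by
      filter_upwards [isOpen_ne.mem_nhds hz] with y hy using hp.map_smul c hc y hy
    have hchain := hscaled.fderiv_eq (𝕜 := ℝ)
    rw [fderiv_fun_const_smul (hp.differentiableAt hz), fderiv_comp_smul] at hchain
    rw [pow_succ', mul_inv, mul_smul, ← hchain, inv_smul_smul₀ hc.ne']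

theorem exists_norm_mul_pow_le [FiniteDimensional ℝ E] (hp : IsSmoothHomogeneousNeg a p) :
    ∃ C, ∀ z ≠ 0, ‖p z‖ * ‖z‖ ^ a ≤ C := by
  have := FiniteDimensional.proper_real E
  have hcont : ContinuousOn p (Metric.sphere 0 1) := fun z hz =>
    (hp.contDiffAt z (ne_zero_of_mem_unit_sphere ⟨z, hz⟩)).continuousAt.continuousWithinAt
  obtain ⟨C, hC⟩ := (isCompact_sphere (0 : E) 1).exists_bound_of_continuousOn hcont
  refine ⟨C, fun z hz => ?_⟩
  have hz' : 0 < ‖z‖ := norm_pos_iff.2 hz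
  have hunit := hC (‖z‖⁻¹ • z) (by simp [norm_smul, hz'.ne'])
  rw [hp.map_smul _ (inv_pos.2 hz') z hz, inv_pow, inv_inv, norm_smul, norm_pow, norm_norm] at hunit
  rwa [mul_comm]

variable [FiniteDimensional ℝ E] {k : ℕ} {p : E → F₁} {f : E → F₂}

theorem isLittleO_bilinear_flat (hp : IsSmoothHomogeneousNeg a p) (hf : IsFlatAtZero (k + a) f)
    (B : F₁ →L[ℝ] F₂ →L[ℝ] G) : (fun z => B (p z) (f z)) =o[𝓝 0] fun z => ‖z‖ ^ k := by
  obtain ⟨C, hC⟩ := hp.exists_norm_mul_pow_le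
  have hbound : (fun z => B (p z) (f z)) =O[𝓝 0] fun z => ‖p z‖ * ‖f z‖ :=
    .of_bound ‖B‖ (.of_forall fun z => by
      simpa [mul_assoc] using B.le_opNorm₂ (p z) (f z))
  refine hbound.trans_isLittleO <| isLittleO_iff.2 fun ε hε => ?_
  filter_upwards [isLittleO_iff.1 hf.isLittleO (c := ε / (|C| + 1)) (by positivity)] with z hfz
  rcases eq_or_ne z 0 with rfl | hz
  · rw [hf.map_zero, norm_zero, mul_zero, norm_zero]
    positivity
  simp only [norm_mul, norm_pow, norm_norm] at hfz ⊢
  calc ‖p z‖ * ‖f z‖ ≤ ‖p z‖ * (ε / (|C| + 1) * ‖z‖ ^ (k + a)) := by gcongr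
    _ = ‖p z‖ * ‖z‖ ^ a * (ε / (|C| + 1) * ‖z‖ ^ k) := by ring
    _ ≤ (|C| + 1) * (ε / (|C| + 1) * ‖z‖ ^ k) := by
      gcongr
      exact (hC z hz).trans ((le_abs_self C).trans (by simp))
    _ = ε * ‖z‖ ^ k := by field

theorem hasFDerivAt_bilinear_flat (hp : IsSmoothHomogeneousNeg a p)
    (hf : IsFlatAtZero (a + 1) f) (B : F₁ →L[ℝ] F₂ →L[ℝ] G) :
    ∀ᶠ z in 𝓝 0, HasFDerivAt (fun z => B (p z) (f z))
      (B.precompR E (p z) (fderiv ℝ f z) + B.precompL E (fderiv ℝ p z) (f z)) z := by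
  filter_upwards [hf.contDiffAt.eventually (ENat.natCast_ne_coe_top _)] with z hfz
  rcases eq_or_ne z 0 with rfl | hz
  · rw [hf.map_zero, hf.fderiv.map_zero, _root_.map_zero, _root_.map_zero, add_zero,
      hasFDerivAt_iff_isLittleO]
    have hlittleO : (fun z => B (p z) (f z)) =o[𝓝 0] fun z => ‖z‖ := by
      simpa using hp.isLittleO_bilinear_flat (k := 1) (hf.mono (by omega)) B
    simpa [hf.map_zero] using hlittleO.of_norm_right
  · exact B.hasFDerivAt_of_bilinear (hp.differentiableAt hz).hasFDerivAt
      (hfz.differentiableAt (by simp)).hasFDerivAt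

theorem contDiffAt_bilinear_flat (hp : IsSmoothHomogeneousNeg a p) (hf : IsFlatAtZero (k + a) f)
    (B : F₁ →L[ℝ] F₂ →L[ℝ] G) : ContDiffAt ℝ k (fun z => B (p z) (f z)) 0 := by
  induction k generalizing F₁ F₂ G a with
  | zero =>
    refine contDiffAt_zero.2 ⟨{z | ContinuousAt (fun z => B (p z) (f z)) z}, ?_,
      fun z (hz : ContinuousAt _ z) => hz.continuousWithinAt⟩
    filter_upwards [hf.contDiffAt.eventually (ENat.natCast_ne_coe_top _)] with z hfz
    rcases eq_or_ne z 0 with rfl | hz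
    · simpa [ContinuousAt, hf.map_zero] using hp.isLittleO_bilinear_flat hf B
    · exact (B.continuous.continuousAt.comp (hp.differentiableAt hz).continuousAt).clm_apply
        hfz.continuousAt
  | succ k ih =>
    have hDf : IsFlatAtZero (k + a) (fderiv ℝ f) := .fderiv (by rwa [add_right_comm])
    have hf' : IsFlatAtZero (k + (a + 1)) f := by rwa [add_comm a, ← add_assoc]
    exact (contDiffAt_succ_iff_hasFDerivAt (n := k)).2
      ⟨_, ⟨_, hp.hasFDerivAt_bilinear_flat (hf.mono (by omega)) B, fun _ hz => hz⟩,
        (ih hp hDf (B.precompR E)).add (ih hp.fderiv hf' (B.precompL E))⟩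

end IsSmoothHomogeneousNeg

end Homogeneous

section RadialCompletion

variable {E : Type u} [NormedAddCommGroup E] [NormedSpace ℝ E] [FiniteDimensional ℝ E]

/-- A functional with `radialDual z z = 1` for `z ≠ 0`, namely `⟨z, ·⟩ / ‖z‖²` for an auxiliary
Euclidean structure on `E`. -/
noncomputable def radialDual (z : E) : E →L[ℝ] ℝ :=
  (‖toEuclidean z‖ ^ 2)⁻¹ • (innerSL ℝ (toEuclidean z)).comp
    (toEuclidean : E ≃L[ℝ] _).toContinuousLinearMap

theorem radialDual_apply_self {z : E} (hz : z ≠ 0) : radialDual z z = 1 := by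
  have : ‖toEuclidean z‖ ≠ 0 := by simpa
  simp [radialDual, this]

theorem isSmoothHomogeneousNeg_radialDual :
    IsSmoothHomogeneousNeg 1 (radialDual : E → E →L[ℝ] ℝ) where
  contDiffAt z hz := by
    have hnorm : ‖toEuclidean z‖ ^ 2 ≠ 0 := by simpa
    have hφ : ContDiffAt ℝ ∞ (toEuclidean : E → _) z := toEuclidean.contDiff.contDiffAt
    exact ((hφ.norm_sq ℝ).inv hnorm).smul
      (((innerSL ℝ).contDiff.contDiffAt.comp z hφ).clm_comp contDiffAt_const)
  map_smul c hc z _ := by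
    ext v
    simp only [radialDual, map_smul, norm_smul, Real.norm_of_nonneg hc.le, smul_apply,
      ContinuousLinearMap.comp_apply, smul_eq_mul]
    field

/-- The symmetric bilinear form `ℓ ⊗ q + q ⊗ ℓ - q z • ℓ ⊗ ℓ` with `ℓ = radialDual z`, as a linear
function of `q`; for `z ≠ 0` it maps `z` to `q`. -/
noncomputable def radialCompletion (z : E) : (E →L[ℝ] ℝ) →L[ℝ] E →L[ℝ] E →L[ℝ] ℝ :=
  ContinuousLinearMap.smulRightL ℝ E (E →L[ℝ] ℝ) (radialDual z) +
    (ContinuousLinearMap.smulRightL ℝ E (E →L[ℝ] ℝ)).flip (radialDual z) -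
    (ContinuousLinearMap.apply ℝ ℝ z).smulRight ((radialDual z).smulRight (radialDual z))

theorem radialCompletion_apply (z : E) (q : E →L[ℝ] ℝ) (u v : E) :
    radialCompletion z q u v = radialDual z u * q v + q u * radialDual z v -
      q z * (radialDual z u * radialDual z v) := by
  simp [radialCompletion]

theorem radialCompletion_comm (z : E) (q : E →L[ℝ] ℝ) (u v : E) :
    radialCompletion z q u v = radialCompletion z q v u := by
  simp only [radialCompletion_apply]
  ring

theorem radialCompletion_apply_self {z : E} (hz : z ≠ 0) (q : E →L[ℝ] ℝ) :
    radialCompletion z q z = q := by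
  ext v
  simp [radialCompletion_apply, radialDual_apply_self hz]

theorem isSmoothHomogeneousNeg_radialCompletion :
    IsSmoothHomogeneousNeg 1 (radialCompletion (E := E)) where
  contDiffAt z hz := by
    have hℓ := isSmoothHomogeneousNeg_radialDual.contDiffAt z hz
    have heval : ContDiffAt ℝ ∞ (ContinuousLinearMap.apply ℝ ℝ : E → _) z :=
      (ContinuousLinearMap.apply ℝ ℝ).contDiff.contDiffAt
    exact (((ContinuousLinearMap.contDiff _).contDiffAt.comp z hℓ).add
      ((ContinuousLinearMap.contDiff _).contDiffAt.comp z hℓ)).sub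
      (heval.smulRight (hℓ.smulRight hℓ))
  map_smul c hc z hz := by
    ext q u v
    simp only [radialCompletion_apply, isSmoothHomogeneousNeg_radialDual.map_smul c hc z hz,
      pow_one, smul_apply, smul_eq_mul, map_smul]
    field

end RadialCompletion

section SymmetricFactor

variable {E F : Type u} [NormedAddCommGroup E] [NormedSpace ℝ E]
  [NormedAddCommGroup F] [NormedSpace ℝ F]

theorem exists_taylorPolynomial_eq_quadratic {k : ℕ} {f : E → F}
    (hf : ContDiffAt ℝ (k + 1 : ℕ) f 0) :
    ∃ D : E → E →L[ℝ] E →L[ℝ] F, ContDiff ℝ ∞ D ∧ (∀ z u v, D z u v = D z v u) ∧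
      ∀ z, taylorPolynomial (k + 1) f z = f 0 + fderiv ℝ f 0 z + D z z z := by
  refine ⟨fun z => ∑ j ∈ Finset.range k,
    ((j + 2 : ℝ)⁻¹ * (j + 1 : ℝ)⁻¹) • taylorTerm j (fderiv ℝ (fderiv ℝ f)) z,
    .sum fun j _ => (contDiff_taylorTerm j _).const_smul _, fun z u v => ?_, fun z => ?_⟩
  · simp only [sum_apply, smul_apply]
    refine Finset.sum_congr rfl fun j hj => ?_
    have hj : j + 2 ≤ k + 1 := by have := Finset.mem_range.1 hj; omega
    rw [taylorTerm_fderiv_fderiv_comm (hf.of_le (mod_cast hj))]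
  · have hterm (j : ℕ) : taylorTerm (j + 1 + 1) f z =
        ((j + 2 : ℝ)⁻¹ * (j + 1 : ℝ)⁻¹) • taylorTerm j (fderiv ℝ (fderiv ℝ f)) z z z := by
      simp only [taylorTerm_succ, smul_apply, smul_smul]
      push_cast
      ring_nf
    rw [taylorPolynomial, Finset.sum_range_succ', Finset.sum_range_succ']
    simp only [hterm, taylorTerm_succ, taylorTerm_zero, sum_apply, smul_apply,
      Nat.cast_zero, zero_add, inv_one, one_smul]
    abel

theorem exists_symmetric_factor_of_quadratic [FiniteDimensional ℝ E] {n : ℕ∞ω}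
    {D : E → E →L[ℝ] E →L[ℝ] E →L[ℝ] ℝ}
    (hD : ContDiff ℝ n D) (hsymm : ∀ z u v, D z u v = D z v u) :
    ∃ h : E → E →L[ℝ] E →L[ℝ] ℝ, ContDiff ℝ n h ∧ (∀ z u v, h z u v = h z v u) ∧
      h 0 = 0 ∧ ∀ z, h z z = D z z z := by
  let flip := (ContinuousLinearMap.flipₗᵢ ℝ E E ℝ).toContinuousLinearEquiv.toContinuousLinearMap
  -- The Koszul combination: its last two terms cancel when the first argument is `z`.
  refine ⟨fun z => D z z + (D z z).flip - (flip.comp (D z)).flip z, ?_, fun z u v => ?_, ?_,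
    fun z => ?_⟩
  · refine contDiff_clm_apply_iff.2 fun u => contDiff_clm_apply_iff.2 fun v => ?_
    change ContDiff ℝ n fun z => D z z u v + D z z v u - D z u v z
    fun_prop
  · simp [flip, hsymm z u v, add_comm]
  · simp
  · ext v
    simp [flip]

theorem exists_symmetric_factor [FiniteDimensional ℝ E] {k : ℕ} {f : E → E →L[ℝ] ℝ}
    (hf : ContDiffAt ℝ (k + 1 : ℕ) f 0) (hf₀ : f 0 = 0)
    (hsymm : ∀ u v, fderiv ℝ f 0 u v = fderiv ℝ f 0 v u) :
    ∃ h : E → E →L[ℝ] E →L[ℝ] ℝ, ContDiffAt ℝ k h 0 ∧ (∀ z u v, h z u v = h z v u) ∧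
      h 0 = fderiv ℝ f 0 ∧ ∀ z, h z z = f z := by
  obtain ⟨D, hD, hDsymm, hP⟩ := exists_taylorPolynomial_eq_quadratic hf
  obtain ⟨s, hs, hssymm, hs₀, hsz⟩ := exists_symmetric_factor_of_quadratic hD hDsymm
  set q := f - taylorPolynomial (k + 1) f with hq
  have hflat : IsFlatAtZero (k + 1) q := isFlatAtZero_sub_taylorPolynomial hf
  have hcompl := isSmoothHomogeneousNeg_radialCompletion.contDiffAt_bilinear_flat hflat
    (.id ℝ _)
  refine ⟨fun z => fderiv ℝ f 0 + s z + radialCompletion z (q z),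
    (contDiffAt_const.add (hs.of_le (mod_cast le_top)).contDiffAt).add hcompl,
    fun z u v => ?_, ?_, fun z => ?_⟩
  · simp [hsymm u v, hssymm z u v, radialCompletion_comm z _ u v]
  · simp [hs₀, hflat.map_zero]
  · rcases eq_or_ne z 0 with rfl | hz
    · simp [hf₀]
    · simp [hsz, radialCompletion_apply_self hz, hq, hP, hf₀]

end SymmetricFactor

section MatrixFactor

variable {ι : Type u} [Fintype ι]

theorem exists_isSymm_matrix_factor {k : ℕ} {f : (ι → ℝ) → ι → ℝ}
    {G : Matrix ι ι ℝ} (hf : ContDiffAt ℝ (k + 1 : ℕ) f 0) (hf₀ : f 0 = 0) (hG : G.IsSymm)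
    (hfG : ∀ v, fderiv ℝ f 0 v = G *ᵥ v) :
    ∃ h : (ι → ℝ) → Matrix ι ι ℝ, (∀ i j, ContDiffAt ℝ k (fun z => h z i j) 0) ∧
      (∀ z, (h z).IsSymm) ∧ h 0 = G ∧ ∀ z, h z *ᵥ z = f z := by
  classical
  let dual : (ι → ℝ) ≃L[ℝ] (ι → ℝ) →L[ℝ] ℝ :=
    ((dotProductEquiv ℝ ι).trans LinearMap.toContinuousLinearMap).toContinuousLinearEquiv
  have dual_apply (w v : ι → ℝ) : dual w v = w ⬝ᵥ v := rfl
  have hderiv (u v : ι → ℝ) : fderiv ℝ (fun z => dual (f z)) 0 u v = (G *ᵥ u) ⬝ᵥ v := by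
    have := dual.comp_fderiv (f := f) (x := 0)
    rw [Function.comp_def] at this
    simp [this, dual_apply, hfG]
  have hderiv_symm (u v : ι → ℝ) : (G *ᵥ u) ⬝ᵥ v = (G *ᵥ v) ⬝ᵥ u := by
    rw [dotProduct_comm, Matrix.dotProduct_mulVec, ← Matrix.mulVec_transpose, hG.eq]
  obtain ⟨B, hB, hBsymm, hB₀, hBz⟩ := exists_symmetric_factor
    (dual.contDiff.contDiffAt.comp 0 hf) (by simp [hf₀])
    (fun u v => by rw [Function.comp_def, hderiv, hderiv, hderiv_symm])
  refine ⟨fun z => Matrix.of fun i j => B z (Pi.single j 1) (Pi.single i 1), fun i j => ?_,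
    fun z => Matrix.IsSymm.ext fun i j => hBsymm z _ _, ?_, fun z => ?_⟩
  · exact (hB.clm_apply contDiffAt_const).clm_apply contDiffAt_const
  · ext i j
    simp [hB₀, Function.comp_def, hderiv]
  · ext i
    have hz : z = ∑ j, z j • Pi.single j (1 : ℝ) := pi_eq_sum_univ' z
    calc ∑ j, B z (Pi.single j 1) (Pi.single i 1) * z j
        = B z (∑ j, z j • Pi.single j (1 : ℝ)) (Pi.single i 1) := by
          simp [map_sum, sum_apply, mul_comm]
      _ = f z i := by rw [← hz, hBz, Function.comp_apply, dual_apply, dotProduct_single_one]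

end MatrixFactor

section PosDef

variable {ι : Type u}

theorem posDef_of_forall_sphere [Fintype ι] {A : Matrix ι ι ℝ} (hA : A.IsSymm)
    (h : ∀ v ∈ Metric.sphere (0 : ι → ℝ) 1, 0 < v ⬝ᵥ A *ᵥ v) : A.PosDef := by
  refine .of_dotProduct_mulVec_pos (Matrix.isHermitian_iff_isSymm.2 hA) fun v hv => ?_
  have hpos := h (‖v‖⁻¹ • v) (by simp [norm_smul, hv])
  rw [Matrix.mulVec_smul, smul_dotProduct, dotProduct_smul, smul_smul, smul_eq_mul] at hpos
  exact pos_of_mul_pos_right hpos (by positivity)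

theorem eventually_posDef [Finite ι] {G : Matrix ι ι ℝ} (hG : G.PosDef) :
    ∀ᶠ A in 𝓝 G, A.IsSymm → A.PosDef := by
  cases nonempty_fintype ι
  have hpos : ∀ᶠ A in 𝓝 G, ∀ v ∈ Metric.sphere (0 : ι → ℝ) 1, 0 < v ⬝ᵥ A *ᵥ v := by
    refine (isCompact_sphere _ _).eventually_forall_of_forall_eventually fun v hv => ?_
    have hcont : Continuous fun p : Matrix ι ι ℝ × (ι → ℝ) => p.2 ⬝ᵥ p.1 *ᵥ p.2 := by fun_prop
    have hv₀ : v ≠ 0 := ne_zero_of_mem_unit_sphere ⟨v, hv⟩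
    exact hcont.continuousAt.eventually_const_lt (by simpa using hG.dotProduct_mulVec_pos hv₀)
  filter_upwards [hpos] with A hA hAsymm using posDef_of_forall_sphere hAsymm hA

end PosDef

section PosDefMapping

open Matrix

variable {ι : Type u} [Fintype ι] [DecidableEq ι]

/-- A matrix that maps `x` to `y` and is positive definite if `p = x ⬝ᵥ y` is positive, namely
`p⁻¹ • y yᵀ + QᵀQ`, where `Q = 1 - p⁻¹ • x yᵀ` kills `x`. -/
noncomputable def posDefMapping (x y : ι → ℝ) : Matrix ι ι ℝ :=
  (x ⬝ᵥ y)⁻¹ • vecMulVec y y +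
    (1 - (x ⬝ᵥ y)⁻¹ • vecMulVec x y)ᵀ * (1 - (x ⬝ᵥ y)⁻¹ • vecMulVec x y)

theorem posDefMapping_mulVec {x y : ι → ℝ} (hxy : x ⬝ᵥ y ≠ 0) :
    posDefMapping x y *ᵥ x = y := by
  have hQ : (1 - (x ⬝ᵥ y)⁻¹ • vecMulVec x y) *ᵥ x = 0 := by
    ext i
    simp [sub_mulVec, smul_mulVec, vecMulVec_mulVec, dotProduct_comm y x,
      hxy]
  rw [posDefMapping, add_mulVec, ← mulVec_mulVec, hQ]
  ext i
  simp [smul_mulVec, vecMulVec_mulVec, dotProduct_comm y x, hxy]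

theorem posDef_posDefMapping {x y : ι → ℝ} (hxy : 0 < x ⬝ᵥ y) :
    (posDefMapping x y).PosDef := by
  set Q := 1 - (x ⬝ᵥ y)⁻¹ • vecMulVec x y with hQ
  have hquad (v : ι → ℝ) : v ⬝ᵥ posDefMapping x y *ᵥ v =
      (x ⬝ᵥ y)⁻¹ * (y ⬝ᵥ v) ^ 2 + Q *ᵥ v ⬝ᵥ Q *ᵥ v := by
    rw [posDefMapping, ← hQ, add_mulVec, dotProduct_add, ← mulVec_mulVec,
      dotProduct_mulVec v Qᵀ, vecMul_transpose, smul_mulVec,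
      vecMulVec_mulVec]
    simp [dotProduct_comm v y, sq]
  refine .of_dotProduct_mulVec_pos ?_ fun v hv => ?_
  · exact isHermitian_iff_isSymm.2 ((IsSymm.smul (transpose_vecMulVec y y) _).add
      (isSymm_transpose_mul_self _))
  · rw [star_trivial, hquad]
    rcases eq_or_ne (y ⬝ᵥ v) 0 with hyv | hyv
    · have hQv : Q *ᵥ v = v := by
        simp [hQ, sub_mulVec, smul_mulVec, vecMulVec_mulVec, hyv]
      simpa [hyv, hQv] using dotProduct_star_self_pos_iff.2 hv
    · have : 0 ≤ Q *ᵥ v ⬝ᵥ Q *ᵥ v := by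
        simpa using dotProduct_star_self_nonneg (Q *ᵥ v)
      positivity

theorem contDiffAt_posDefMapping {E : Type*} [NormedAddCommGroup E] [NormedSpace ℝ E] {n : ℕ∞ω}
    {X Y : E → ι → ℝ} {m : E} (hX : ContDiffAt ℝ n X m) (hY : ContDiffAt ℝ n Y m)
    (hXY : X m ⬝ᵥ Y m ≠ 0) (i j : ι) :
    ContDiffAt ℝ n (fun x => posDefMapping (X x) (Y x) i j) m := by
  have hX' := contDiffAt_pi.1 hX
  have hY' := contDiffAt_pi.1 hY
  have hinv : ContDiffAt ℝ n (fun x => (X x ⬝ᵥ Y x)⁻¹) m :=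
    ContDiffAt.inv (ContDiffAt.sum fun i _ => (hX' i).mul (hY' i)) hXY
  have hQ (i j : ι) : ContDiffAt ℝ n
      (fun x => (1 - (X x ⬝ᵥ Y x)⁻¹ • vecMulVec (X x) (Y x)) i j) m :=
    contDiffAt_const.sub (hinv.mul ((hX' i).mul (hY' j)))
  exact (hinv.mul ((hY' i).mul (hY' j))).add (ContDiffAt.sum fun l _ => (hQ l i).mul (hQ l j))

end PosDefMapping

section LocalInverse

variable {E F : Type*} [NormedAddCommGroup E] [NormedSpace ℝ E] [CompleteSpace E]
  [NormedAddCommGroup F] [NormedSpace ℝ F] [CompleteSpace F]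

theorem exists_contDiffAt_leftInverse {n : ℕ∞ω} {f : E → F} {a : E} (hf : ContDiffAt ℝ n f a)
    (hn : n ≠ 0) (hbij : Function.Bijective (fderiv ℝ f a)) :
    ∃ ψ : F → E, ContDiffAt ℝ n ψ (f a) ∧ (∀ᶠ x in 𝓝 a, ψ (f x) = x) ∧
      ∀ v, fderiv ℝ f a (fderiv ℝ ψ (f a) v) = v := by
  let e : E ≃L[ℝ] F := .ofBijective (fderiv ℝ f a) (LinearMap.ker_eq_bot.2 hbij.1)
    (LinearMap.range_eq_top.2 hbij.2)
  have hf' : HasFDerivAt f (e : E →L[ℝ] F) a := (hf.differentiableAt hn).hasFDerivAt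
  have hstrict := hf.hasStrictFDerivAt' hf' hn
  refine ⟨hf.localInverse hf' hn, hf.to_localInverse hf' hn, hstrict.eventually_left_inverse,
    fun v => ?_⟩
  have hψ' : fderiv ℝ (hf.localInverse hf' hn) (f a) = e.symm :=
    hstrict.to_localInverse.hasFDerivAt.fderiv
  rw [hψ']
  exact e.apply_symm_apply v

end LocalInverse

section LocalFactor

open Matrix

variable {E : Type*} [NormedAddCommGroup E] [NormedSpace ℝ E] {ι : Type u} [Fintype ι]

/-- The positive definite matrices mapping `x` to `y`. -/
def posDefFactors (x y : ι → ℝ) : Set (Matrix ι ι ℝ) :=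
  {A | A.PosDef ∧ y = A *ᵥ x}

theorem convex_posDefFactors (x y : ι → ℝ) : Convex ℝ (posDefFactors x y) := by
  refine convex_iff_forall_pos.2 fun A hA B hB a b ha hb hab => ⟨?_, ?_⟩
  · exact (hA.1.smul ha).add (hB.1.smul hb)
  · rw [add_mulVec, smul_mulVec, smul_mulVec, ← hA.2, ← hB.2, ← add_smul, hab, one_smul]

theorem exists_local_posDefFactor_of_eq_zero [CompleteSpace E] {k : ℕ} {X Y : E → ι → ℝ} {m : E}
    {G : Matrix ι ι ℝ} (hX : ContDiffAt ℝ (k + 1 : ℕ) X m) (hY : ContDiffAt ℝ (k + 1 : ℕ) Y m)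
    (hXm : X m = 0) (hYm : Y m = 0) (hbij : Function.Bijective (fderiv ℝ Y m)) (hG : G.PosDef)
    (hGXY : ∀ v, fderiv ℝ Y m v = G *ᵥ fderiv ℝ X m v) :
    ∃ g : E → Matrix ι ι ℝ, (∀ i j, ContDiffAt ℝ k (fun x => g x i j) m) ∧
      ∀ᶠ x in 𝓝 m, g x ∈ posDefFactors (X x) (Y x) := by
  classical
  have hG_bij : Function.Bijective G.mulVec :=
    ⟨mulVec_injective_of_isUnit hG.isUnit, mulVec_surjective_iff_isUnit.2 hG.isUnit⟩
  have hY_comp : fderiv ℝ Y m = G.mulVec ∘ fderiv ℝ X m := funext hGXY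
  have hX_bij : Function.Bijective (fderiv ℝ X m) := (hG_bij.of_comp_iff' _).1 (hY_comp ▸ hbij)
  obtain ⟨ψ, hψ, hψX, hψ'⟩ := exists_contDiffAt_leftInverse hX (by simp) hX_bij
  have hψm : ψ 0 = m := hXm ▸ hψX.self_of_nhds
  rw [hXm] at hψ hψ'
  have hYψ : ContDiffAt ℝ (k + 1 : ℕ) Y (ψ 0) := by rwa [hψm]
  have hfG (v : ι → ℝ) : fderiv ℝ (Y ∘ ψ) 0 v = G *ᵥ v := by
    rw [fderiv_comp 0 (hYψ.differentiableAt (by simp)) (hψ.differentiableAt (by simp)), hψm,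
      ContinuousLinearMap.comp_apply, hGXY, hψ']
  obtain ⟨h, hh, hhsymm, hh₀, hhz⟩ := exists_isSymm_matrix_factor (hYψ.comp 0 hψ)
    (by simp [hψm, hYm]) (isHermitian_iff_isSymm.1 hG.isHermitian) hfG
  have hh_cont : ContinuousAt h 0 :=
    continuousAt_pi.2 fun i => continuousAt_pi.2 fun j => (hh i j).continuousAt
  have hX_lim : Tendsto X (𝓝 m) (𝓝 0) := hXm ▸ hX.continuousAt.tendsto
  refine ⟨fun x => h (X x), fun i j => ?_, ?_⟩
  · exact (hXm.symm ▸ hh i j :).comp m (hX.of_le (mod_cast k.le_succ))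
  · have hpos : ∀ᶠ z in 𝓝 0, (h z).IsSymm → (h z).PosDef :=
      hh_cont.eventually (hh₀.symm ▸ eventually_posDef hG)
    filter_upwards [hX_lim.eventually hpos, hψX] with x hpos hψX
    exact ⟨hpos (hhsymm _), by rw [hhz, Function.comp_apply, hψX]⟩

theorem exists_local_posDefFactor_of_dotProduct_pos {n : ℕ∞ω} {X Y : E → ι → ℝ} {m : E}
    (hX : ContDiffAt ℝ n X m) (hY : ContDiffAt ℝ n Y m) (hXY : 0 < X m ⬝ᵥ Y m) :
    ∃ g : E → Matrix ι ι ℝ, (∀ i j, ContDiffAt ℝ n (fun x => g x i j) m) ∧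
      ∀ᶠ x in 𝓝 m, g x ∈ posDefFactors (X x) (Y x) := by
  classical
  refine ⟨fun x => posDefMapping (X x) (Y x), contDiffAt_posDefMapping hX hY hXY.ne', ?_⟩
  have hcont : ContinuousAt (fun x => X x ⬝ᵥ Y x) m :=
    (continuous_fst.dotProduct continuous_snd).continuousAt.comp
      (hX.continuousAt.prodMk hY.continuousAt)
  filter_upwards [hcont.eventually_const_lt hXY] with x hx
  exact ⟨posDef_posDefMapping hx, (posDefMapping_mulVec hx.ne').symm⟩

theorem exists_local_posDefFactor [CompleteSpace E] {k : ℕ} {X Y : E → ι → ℝ} {m : E}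
    (hX : ContDiffAt ℝ (k + 1 : ℕ) X m) (hY : ContDiffAt ℝ (k + 1 : ℕ) Y m)
    (hcrit : Y m = 0 → Function.Bijective (fderiv ℝ Y m))
    (hpos : Y m ≠ 0 → 0 < X m ⬝ᵥ Y m) (hzero : Y m = 0 → X m = 0)
    (hderiv : Y m = 0 → ∃ G : Matrix ι ι ℝ, G.PosDef ∧
      ∀ v, fderiv ℝ Y m v = G *ᵥ fderiv ℝ X m v) :
    ∃ g : E → Matrix ι ι ℝ, (∀ i j, ContDiffAt ℝ k (fun x => g x i j) m) ∧
      ∀ᶠ x in 𝓝 m, g x ∈ posDefFactors (X x) (Y x) := by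
  rcases eq_or_ne (Y m) 0 with hYm | hYm
  · obtain ⟨G, hG, hGXY⟩ := hderiv hYm
    exact exists_local_posDefFactor_of_eq_zero hX hY (hzero hYm) hYm (hcrit hYm) hG hGXY
  · have hle : (k : ℕ∞ω) ≤ (k + 1 : ℕ) := mod_cast k.le_succ
    exact exists_local_posDefFactor_of_dotProduct_pos (hX.of_le hle) (hY.of_le hle) (hpos hYm)

end LocalFactor

section Patching

open scoped Manifold

variable {E : Type*} [NormedAddCommGroup E] [NormedSpace ℝ E] [FiniteDimensional ℝ E]

theorem exists_contDiffOn_forall_mem_convex_of_local {F : Type*} [NormedAddCommGroup F]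
    [NormedSpace ℝ F] {n : ℕ∞} {Ω : Set E} (hΩ : IsOpen Ω) {t : E → Set F}
    (ht : ∀ x ∈ Ω, Convex ℝ (t x))
    (hloc : ∀ m ∈ Ω, ∃ g : E → F, ∀ᶠ x in 𝓝 m, ContDiffAt ℝ n g x ∧ g x ∈ t x) :
    ∃ g : E → F, ContDiffOn ℝ n g Ω ∧ ∀ x ∈ Ω, g x ∈ t x := by
  let M : TopologicalSpace.Opens E := ⟨Ω, hΩ⟩
  have : LocallyCompactSpace M := hΩ.locallyCompactSpace
  obtain ⟨g, hg⟩ := exists_contMDiffMap_forall_mem_convex_of_local (M := M) (n := n)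
    𝓘(ℝ, E) (t := fun x => t x) (fun x => ht x x.2) fun m => by
      obtain ⟨g, hg⟩ := hloc m m.2
      refine ⟨Subtype.val ⁻¹' {x | ContDiffAt ℝ n g x ∧ g x ∈ t x},
        continuous_subtype_val.continuousAt.preimage_mem_nhds hg, fun x => g x,
        fun x hx => ?_, fun x hx => hx.2⟩
      exact (contMDiffAt_subtype_iff.2 (contMDiffAt_iff_contDiffAt.2 hx.1)).contMDiffWithinAt
  have hextend (x : M) : Function.extend Subtype.val g 0 x.1 = g x :=
    Subtype.val_injective.extend_apply g 0 x
  refine ⟨Function.extend Subtype.val g 0, fun x hx => ?_, fun x hx => ?_⟩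
  · have hgx := g.contMDiff ⟨x, hx⟩
    rw [← funext hextend, contMDiffAt_subtype_iff, contMDiffAt_iff_contDiffAt] at hgx
    exact hgx.contDiffWithinAt
  · exact hextend ⟨x, hx⟩ ▸ hg ⟨x, hx⟩

theorem exists_contDiffOn_matrix_forall_mem_convex_of_local {ι κ : Type*} [Finite ι] [Finite κ]
    {k : ℕ} {Ω : Set E} (hΩ : IsOpen Ω) {t : E → Set (Matrix ι κ ℝ)}
    (ht : ∀ x ∈ Ω, Convex ℝ (t x))
    (hloc : ∀ m ∈ Ω, ∃ g : E → Matrix ι κ ℝ, (∀ i j, ContDiffAt ℝ k (fun x => g x i j) m) ∧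
      ∀ᶠ x in 𝓝 m, g x ∈ t x) :
    ∃ g : E → Matrix ι κ ℝ, (∀ i j, ContDiffOn ℝ k (fun x => g x i j) Ω) ∧
      ∀ x ∈ Ω, g x ∈ t x := by
  cases nonempty_fintype ι
  cases nonempty_fintype κ
  obtain ⟨g, hg, hgt⟩ := exists_contDiffOn_forall_mem_convex_of_local (F := ι → κ → ℝ) (n := k)
    (t := t) hΩ ht fun m hm => by
      obtain ⟨g, hg, hgt⟩ := hloc m hm
      have hg' : ContDiffAt ℝ k (fun x i j => g x i j) m :=
        contDiffAt_pi.2 fun i => contDiffAt_pi.2 fun j => hg i j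
      exact ⟨g, (hg'.eventually (by simp)).and hgt⟩
  exact ⟨g, fun i j => contDiffOn_pi.1 (contDiffOn_pi.1 hg i) j, hgt⟩

end Patching

section Necessity

open Matrix

theorem hasFDerivAt_clm_apply_of_eq_zero {𝕜 E F G : Type*} [NontriviallyNormedField 𝕜]
    [NormedAddCommGroup E] [NormedSpace 𝕜 E] [NormedAddCommGroup F] [NormedSpace 𝕜 F]
    [NormedAddCommGroup G] [NormedSpace 𝕜 G] {c : E → F →L[𝕜] G} {f : E → F} {f' : E →L[𝕜] F}
    {m : E} (hc : ContinuousAt c m) (hf : HasFDerivAt f f' m) (hfm : f m = 0) :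
    HasFDerivAt (fun x => c x (f x)) ((c m).comp f') m := by
  have hc_sub : (fun x => c x - c m) =o[𝓝 m] fun _ => (1 : ℝ) :=
    (isLittleO_one_iff ℝ).2 (tendsto_sub_nhds_zero_iff.2 hc)
  have hf_bound : f =O[𝓝 m] fun x => x - m := by simpa [hfm] using hf.isBigO_sub
  have hremainder : (fun x => (c x - c m) (f x)) =o[𝓝 m] fun x => x - m := by
    refine (IsBigO.of_norm_le fun x => ?_ :
      _ =O[𝓝 m] fun x => ‖c x - c m‖ * ‖f x‖).trans_isLittleO ?_
    · exact (c x - c m).le_opNorm (f x)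
    · simpa using hc_sub.norm_left.mul_isBigO hf_bound.norm_norm
  have hsub : HasFDerivAt (fun x => (c x - c m) (f x)) (0 : E →L[𝕜] G) m :=
    .of_isLittleO (by simpa [hfm] using hremainder)
  simpa [Pi.add_def] using hsub.add ((c m).hasFDerivAt.comp m hf)

variable {E : Type*} [NormedAddCommGroup E] [NormedSpace ℝ E] {ι : Type*} [Fintype ι]

theorem fderiv_mulVec_of_eq_zero {κ : Type*} [Finite κ] {A : E → Matrix κ ι ℝ} {X : E → ι → ℝ}
    {Y : E → κ → ℝ} {m : E}
    (hA : ContinuousAt A m) (hX : DifferentiableAt ℝ X m) (hXm : X m = 0)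
    (hY : ∀ᶠ x in 𝓝 m, Y x = A x *ᵥ X x) (v : E) :
    fderiv ℝ Y m v = A m *ᵥ fderiv ℝ X m v := by
  classical
  cases nonempty_fintype κ
  let toCLM : Matrix κ ι ℝ →ₗ[ℝ] (ι → ℝ) →L[ℝ] κ → ℝ :=
    (Matrix.toLin'.trans LinearMap.toContinuousLinearMap).toLinearMap
  have hcont : ContinuousAt (fun x => toCLM (A x)) m :=
    toCLM.continuous_of_finiteDimensional.continuousAt.comp hA
  have hderiv := hasFDerivAt_clm_apply_of_eq_zero hcont hX.hasFDerivAt hXm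
  rw [(hderiv.congr_of_eventuallyEq hY).fderiv]
  rfl

theorem dotProduct_mulVec_pos_of_posDef {A : Matrix ι ι ℝ} (hA : A.PosDef) {x : ι → ℝ}
    (hx : A *ᵥ x ≠ 0) : 0 < x ⬝ᵥ A *ᵥ x := by
  have hx₀ : x ≠ 0 := by
    rintro rfl
    exact hx (mulVec_zero A)
  simpa using hA.dotProduct_mulVec_pos hx₀

theorem eq_zero_of_mulVec_eq_zero_of_posDef {A : Matrix ι ι ℝ} (hA : A.PosDef) {x : ι → ℝ}
    (hx : A *ᵥ x = 0) : x = 0 := by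
  classical
  exact mulVec_injective_of_isUnit hA.isUnit (hx.trans (mulVec_zero A).symm)

end Necessity

theorem main_characterisation_Ck_general {E : Type*} [NormedAddCommGroup E] [NormedSpace ℝ E]
    [FiniteDimensional ℝ E] {ι : Type u} [Fintype ι] (k : ℕ) {Ω : Set E} (hΩ : IsOpen Ω)
    {X Y : E → ι → ℝ} (hX : ContDiffOn ℝ (k + 1) X Ω) (hY : ContDiffOn ℝ (k + 1) Y Ω)
    (hcrit : ∀ m ∈ Ω, Y m = 0 → Function.Bijective (fderiv ℝ Y m)) :
    (∃ g : E → Matrix ι ι ℝ, (∀ i j, ContDiffOn ℝ k (fun x => g x i j) Ω) ∧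
      (∀ x ∈ Ω, (g x).PosDef) ∧ ∀ x ∈ Ω, Y x = g x *ᵥ X x) ↔
    (∀ m ∈ Ω, Y m ≠ 0 → 0 < X m ⬝ᵥ Y m) ∧ (∀ m ∈ Ω, Y m = 0 → X m = 0) ∧
      ∀ m ∈ Ω, Y m = 0 → ∃ G : Matrix ι ι ℝ, G.PosDef ∧
        ∀ v, fderiv ℝ Y m v = G *ᵥ fderiv ℝ X m v := by
  have hXat (m : E) (hm : m ∈ Ω) : ContDiffAt ℝ (k + 1 : ℕ) X m :=
    mod_cast hX.contDiffAt (hΩ.mem_nhds hm)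
  have hYat (m : E) (hm : m ∈ Ω) : ContDiffAt ℝ (k + 1 : ℕ) Y m :=
    mod_cast hY.contDiffAt (hΩ.mem_nhds hm)
  constructor
  · rintro ⟨g, hg, hpos, hgXY⟩
    have hzero (m : E) (hm : m ∈ Ω) (hYm : Y m = 0) : X m = 0 :=
      eq_zero_of_mulVec_eq_zero_of_posDef (hpos m hm) (hgXY m hm ▸ hYm)
    refine ⟨fun m hm hYm => ?_, hzero, fun m hm hYm => ⟨g m, hpos m hm, ?_⟩⟩
    · rw [hgXY m hm] at hYm ⊢
      exact dotProduct_mulVec_pos_of_posDef (hpos m hm) hYm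
    · have hg_cont : ContinuousAt g m := continuousAt_pi.2 fun i => continuousAt_pi.2 fun j =>
        (hg i j).continuousOn.continuousAt (hΩ.mem_nhds hm)
      exact fderiv_mulVec_of_eq_zero hg_cont ((hXat m hm).differentiableAt (by simp))
        (hzero m hm hYm) (eventually_of_mem (hΩ.mem_nhds hm) hgXY)
  · rintro ⟨hpos, hzero, hderiv⟩
    have := FiniteDimensional.complete ℝ E
    obtain ⟨g, hg, hgmem⟩ := exists_contDiffOn_matrix_forall_mem_convex_of_local hΩ
      (fun x _ => convex_posDefFactors (X x) (Y x)) fun m hm => exists_local_posDefFactor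
        (hXat m hm) (hYat m hm) (hcrit m hm) (hpos m hm) (hzero m hm) (hderiv m hm)
    exact ⟨g, hg, fun x hx => (hgmem x hx).1, fun x hx => (hgmem x hx).2⟩

/-- **`C^k`-regularity version of the main theorem (coordinate version).**
Let `n ≥ 1`, `k ∈ ℕ`, `Ω ⊆ ℝⁿ` open, and `X Y : Ω → ℝⁿ` of class `C^{k+1}`. Assume that
at every `m ∈ Ω` with `Y m = 0` the derivative `DY m` is invertible. Then a field of
symmetric positive definite matrices `g` of class `C^k` with `Y x = g x · X x` on `Ω`
exists iff (i) `⟨X m, Y m⟩ > 0` whenever `Y m ≠ 0`, (ii) `X m = 0` whenever `Y m = 0`,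
and (iii) at each zero `m` of `Y` there is a symmetric positive definite `ḡ` with
`DY m v = ḡ · (DX m v)` for all `v`. -/
theorem main_characterisation_Ck
    (n : ℕ) (hn : 1 ≤ n) (k : ℕ) (Ω : Set (Fin n → ℝ)) (hΩ : IsOpen Ω)
    (X Y : (Fin n → ℝ) → (Fin n → ℝ))
    (hX : ContDiffOn ℝ (k + 1) X Ω) (hY : ContDiffOn ℝ (k + 1) Y Ω)
    (hcrit : ∀ m ∈ Ω, Y m = 0 → Function.Bijective (fderiv ℝ Y m)) :
    (∃ g : (Fin n → ℝ) → Matrix (Fin n) (Fin n) ℝ,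
      (∀ i j, ContDiffOn ℝ k (fun x => g x i j) Ω) ∧
      (∀ x ∈ Ω, (g x).PosDef) ∧
      (∀ x ∈ Ω, Y x = (g x).mulVec (X x)))
    ↔
    ((∀ m ∈ Ω, Y m ≠ 0 → 0 < ∑ i, X m i * Y m i) ∧
     (∀ m ∈ Ω, Y m = 0 → X m = 0) ∧
     (∀ m ∈ Ω, Y m = 0 → ∃ gbar : Matrix (Fin n) (Fin n) ℝ, gbar.PosDef ∧
        ∀ v : Fin n → ℝ, fderiv ℝ Y m v = gbar.mulVec (fderiv ℝ X m v))) :=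
  main_characterisation_Ck_general k hΩ hX hY hcrit
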